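/- arXiv:1307.0363 — 2 statements merged into one kernel-verified Lean document; each statement's English description precedes it below -/
import Mathlib

section
/- Quantum data-processing inequality: for every state ρ_RQ on H_R⊗H_Q (finite-dimensional) and every CPTP map 𝓔 : L(H_Q) → L(H_{Q'}), setting σ_{RQ'} = (id_R⊗𝓔)(ρ_RQ), one has I(R;Q)_ρ ≥ I(R;Q')_σ. -/
open Matrix Kronecker ComplexOrder

noncomputable section

/-- Von Neumann entropy `S(ρ) = -Tr[ρ log ρ]`, computed from the eigenvalues
(junk value `0` if `ρ` is not Hermitian). -/
def vnEntropy {n : Type*} [Fintype n] [DecidableEq n] (ρ : Matrix n n ℂ) : ℝ :=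
  if h : ρ.IsHermitian then ∑ i, Real.negMulLog (h.eigenvalues i) else 0

/-- Partial trace over the first tensor factor. -/
def ptraceLeft {A B : Type*} [Fintype A] (M : Matrix (A × B) (A × B) ℂ) : Matrix B B ℂ :=
  Matrix.of fun x y => ∑ a, M (a, x) (a, y)

/-- Partial trace over the second tensor factor. -/
def ptraceRight {A B : Type*} [Fintype B] (M : Matrix (A × B) (A × B) ℂ) : Matrix A A ℂ :=
  Matrix.of fun x y => ∑ b, M (x, b) (y, b)

/-- Partial trace over the last factor of a tripartite operator on `R ⊗ Q ⊗ E`. -/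
def ptrace3E {R Q E : Type*} [Fintype E] (M : Matrix (R × Q × E) (R × Q × E) ℂ) :
    Matrix (R × Q) (R × Q) ℂ :=
  Matrix.of fun x y => ∑ e, M (x.1, x.2, e) (y.1, y.2, e)

/-- A state is a positive semidefinite operator with unit trace. -/
def IsState {n : Type*} [Fintype n] (ρ : Matrix n n ℂ) : Prop :=
  ρ.PosSemidef ∧ ρ.trace = 1

/-- Quantum mutual information `I(A;B) = S(ρ_A) + S(ρ_B) - S(ρ_AB)`. -/
def mutualInfo {A B : Type*} [Fintype A] [DecidableEq A] [Fintype B] [DecidableEq B]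
    (ρ : Matrix (A × B) (A × B) ℂ) : ℝ :=
  vnEntropy (ptraceRight ρ) + vnEntropy (ptraceLeft ρ) - vnEntropy ρ

/-- Conditional quantum mutual information
`I(R;E|Q) = S(ρ_RQ) + S(ρ_QE) - S(ρ_RQE) - S(ρ_Q)`. -/
def condMutualInfo {R Q E : Type*} [Fintype R] [DecidableEq R] [Fintype Q] [DecidableEq Q]
    [Fintype E] [DecidableEq E] (ρ : Matrix (R × Q × E) (R × Q × E) ℂ) : ℝ :=
  vnEntropy (ptrace3E ρ) + vnEntropy (ptraceLeft ρ) - vnEntropy ρ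
    - vnEntropy (ptraceLeft (ptrace3E ρ))

/-- The map `id_n ⊗ Φ` obtained by applying `Φ` blockwise. -/
def idTensor {A B : Type*} (n : Type*) (Φ : Matrix A A ℂ →ₗ[ℂ] Matrix B B ℂ)
    (M : Matrix (n × A) (n × A) ℂ) : Matrix (n × B) (n × B) ℂ :=
  Matrix.of fun x y => Φ (Matrix.of fun a b => M (x.1, a) (y.1, b)) x.2 y.2

/-- Complete positivity: for every `k`, `id_{Fin k} ⊗ Φ` preserves positive semidefiniteness. -/
def IsCPMap {A B : Type*} [Fintype A] [Fintype B]
    (Φ : Matrix A A ℂ →ₗ[ℂ] Matrix B B ℂ) : Prop :=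
  ∀ (k : ℕ) (M : Matrix (Fin k × A) (Fin k × A) ℂ), M.PosSemidef →
    (idTensor (Fin k) Φ M).PosSemidef

/-- A CPTP map (quantum channel). -/
def IsCPTP {A B : Type*} [Fintype A] [Fintype B]
    (Φ : Matrix A A ℂ →ₗ[ℂ] Matrix B B ℂ) : Prop :=
  IsCPMap Φ ∧ ∀ M : Matrix A A ℂ, (Φ M).trace = M.trace

/-- The family of states on `Q ⊗ E` steered from `R` by measurements on a tripartite state. -/
def steered {R Q E : Type*} [Fintype R] [Fintype Q] [DecidableEq Q] [Fintype E] [DecidableEq E]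
    (ρ : Matrix (R × Q × E) (R × Q × E) ℂ) : Set (Matrix (Q × E) (Q × E) ℂ) :=
  { ω | ∃ P : Matrix R R ℂ, P.PosSemidef ∧
      (ptraceLeft ((P ⊗ₖ (1 : Matrix (Q × E) (Q × E) ℂ)) * ρ)).trace ≠ 0 ∧
      ω = ((ptraceLeft ((P ⊗ₖ (1 : Matrix (Q × E) (Q × E) ℂ)) * ρ)).trace)⁻¹ •
            ptraceLeft ((P ⊗ₖ (1 : Matrix (Q × E) (Q × E) ℂ)) * ρ) }

/-- A post-selected family of bipartite system-environment states: the normalized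
output state space of some completely positive map `𝒫 : Q₀E₀ → QE`. -/
def IsPostSelected {Q E : Type*} [Fintype Q] [Fintype E]
    (S : Set (Matrix (Q × E) (Q × E) ℂ)) : Prop :=
  ∃ (n0 m0 : ℕ)
    (P : Matrix (Fin n0 × Fin m0) (Fin n0 × Fin m0) ℂ →ₗ[ℂ] Matrix (Q × E) (Q × E) ℂ),
    IsCPMap P ∧
    S = { ω | ∃ ρ0, IsState ρ0 ∧ (P ρ0).trace ≠ 0 ∧ ω = ((P ρ0).trace)⁻¹ • P ρ0 }

/-!
Since `S(ρ_Q) - S(ρ_RQ) = D(ρ_RQ‖1 ⊗ ρ_Q)` and a channel on `Q` leaves `ρ_R` unchanged, the data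
processing inequality is an instance of the monotonicity of the relative entropy `D` under channels.

By the integral representation of the logarithm, `D(ρ‖σ)` is governed by the numbers
`Re Tr(ρ Xᴴ)`, `t > 0`, where `X` solves `σ X + t X ρ = ρ`. Each of them is the maximum over all
matrices `X` of the concave functional `2 Re Tr(ρ Xᴴ) - Tr(σ X Xᴴ) - t Tr(ρ Xᴴ X)`. If `Φ` is a
channel with adjoint `Φ†`, the Kadison–Schwarz inequality `Φ†(Y) Φ†(Y)ᴴ ≤ Φ†(Y Yᴴ)` shows that the
functional of `(Φ ρ, Φ σ)` at `Y` is at most the functional of `(ρ, σ)` at `Φ† Y`, so the maxima can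
only decrease under `Φ`.
-/

section WeightedLog

open Filter Topology

variable {ι κ : Type*} [Fintype ι] [Fintype κ]

lemma hasDerivAt_sum_mul_log_one_add_mul (w : ι → ℝ) {r : ι → ℝ} (hr : ∀ i, 0 ≤ r i) {t : ℝ}
    (ht : 0 ≤ t) :
    HasDerivAt (fun t => ∑ i, w i * Real.log (1 + t * r i))
      (∑ i, w i * (r i / (1 + t * r i))) t := by
  refine HasDerivAt.fun_sum fun i _ => HasDerivAt.const_mul _ ?_
  have hpos : 0 < 1 + t * r i := by have := hr i; positivity
  simpa using (((hasDerivAt_id t).mul_const (r i)).const_add 1).log hpos.ne'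

lemma tendsto_sum_mul_log_one_add_mul_sub {w r : ι → ℝ} (hr : ∀ i, 0 ≤ r i)
    (hw : ∀ i, r i = 0 → w i = 0) :
    Tendsto (fun t => ∑ i, w i * Real.log (1 + t * r i) - (∑ i, w i) * Real.log t) atTop
      (𝓝 (∑ i, w i * Real.log (r i))) := by
  have hlim : Tendsto (fun t : ℝ => ∑ i, w i * Real.log (1 / t + r i)) atTop
      (𝓝 (∑ i, w i * Real.log (r i))) := by
    refine tendsto_finsetSum _ fun i _ => ?_
    by_cases h : r i = 0
    · simp [hw i h]
    · refine ((Tendsto.log ?_ h)).const_mul _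
      simpa using (tendsto_id.const_div_atTop (1 : ℝ)).add_const (r i)
  refine hlim.congr' ?_
  filter_upwards [eventually_gt_atTop 0] with t ht
  rw [Finset.sum_mul, ← Finset.sum_sub_distrib]
  refine Finset.sum_congr rfl fun i _ => ?_
  have hpos : 0 < 1 + t * r i := by have := hr i; positivity
  rw [← mul_sub, ← Real.log_div hpos.ne' ht.ne']
  congr 2
  field_simp

-- Both sides are read off from `G t = ∑ w log (1 + t r) - ∑ w' log (1 + t r')`: it vanishes at
-- `t = 0`, its derivative is the difference of the resolvent sums, and as `t → ∞` it tends to the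
-- difference of the logarithmic sums because the two total weights agree.
theorem sum_mul_log_le_of_sum_mul_resolvent_le {w r : ι → ℝ} {w' r' : κ → ℝ}
    (hr : ∀ i, 0 ≤ r i) (hw : ∀ i, r i = 0 → w i = 0)
    (hr' : ∀ k, 0 ≤ r' k) (hw' : ∀ k, r' k = 0 → w' k = 0)
    (hsum : ∑ k, w' k = ∑ i, w i)
    (hle : ∀ t, 0 < t →
      ∑ k, w' k * (r' k / (1 + t * r' k)) ≤ ∑ i, w i * (r i / (1 + t * r i))) :
    ∑ k, w' k * Real.log (r' k) ≤ ∑ i, w i * Real.log (r i) := by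
  let G : ℝ → ℝ := fun t =>
    ∑ i, w i * Real.log (1 + t * r i) - ∑ k, w' k * Real.log (1 + t * r' k)
  have hderiv : ∀ t, 0 ≤ t → HasDerivAt G
      (∑ i, w i * (r i / (1 + t * r i)) - ∑ k, w' k * (r' k / (1 + t * r' k))) t := fun t ht =>
    (hasDerivAt_sum_mul_log_one_add_mul w hr ht).sub (hasDerivAt_sum_mul_log_one_add_mul w' hr' ht)
  have hmono : MonotoneOn G (Set.Ici 0) := by
    refine monotoneOn_of_hasDerivWithinAt_nonneg (convex_Ici 0)
      (fun t ht => (hderiv t ht).continuousAt.continuousWithinAt)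
      (fun t ht => (hderiv t (interior_subset ht)).hasDerivWithinAt) fun t ht => ?_
    exact sub_nonneg.2 (hle t (by simpa using ht))
  have hlim : Tendsto G atTop
      (𝓝 (∑ i, w i * Real.log (r i) - ∑ k, w' k * Real.log (r' k))) := by
    refine ((tendsto_sum_mul_log_one_add_mul_sub hr hw).sub
      (tendsto_sum_mul_log_one_add_mul_sub hr' hw')).congr fun t => ?_
    rw [hsum, sub_sub_sub_cancel_right]
  refine sub_nonneg.1 (ge_of_tendsto hlim ?_)
  filter_upwards [eventually_ge_atTop 0] with t ht
  simpa [G] using hmono Set.self_mem_Ici ht ht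

end WeightedLog

section KrausMap

variable {κ m n : Type*} [Fintype κ] [Fintype n]

/-- The completely positive map `X ↦ ∑ k, L k * X * (L k)ᴴ` with Kraus operators `L k`. Its adjoint
for the trace inner product is `krausMap fun k => (L k)ᴴ`. -/
def krausMap (L : κ → Matrix m n ℂ) : Matrix n n ℂ →ₗ[ℂ] Matrix m m ℂ where
  toFun X := ∑ k, L k * X * (L k)ᴴ
  map_add' X Y := by simp only [Matrix.mul_add, Matrix.add_mul, Finset.sum_add_distrib]
  map_smul' c X := by
    simp only [Matrix.mul_smul, Matrix.smul_mul, Finset.smul_sum, RingHom.id_apply]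

lemma krausMap_apply (L : κ → Matrix m n ℂ) (X : Matrix n n ℂ) :
    krausMap L X = ∑ k, L k * X * (L k)ᴴ :=
  rfl

lemma conjTranspose_krausMap (L : κ → Matrix m n ℂ) (X : Matrix n n ℂ) :
    (krausMap L X)ᴴ = krausMap L Xᴴ := by
  simp only [krausMap_apply, conjTranspose_sum, conjTranspose_mul, conjTranspose_conjTranspose,
    Matrix.mul_assoc]

lemma posSemidef_krausMap [Finite m] (L : κ → Matrix m n ℂ) {X : Matrix n n ℂ} (hX : X.PosSemidef) :
    (krausMap L X).PosSemidef :=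
  posSemidef_sum _ fun k _ => hX.mul_mul_conjTranspose_same (L k)

variable [Fintype m]

lemma trace_krausMap_mul (L : κ → Matrix m n ℂ) (X : Matrix n n ℂ) (Y : Matrix m m ℂ) :
    (krausMap L X * Y).trace = (X * krausMap (fun k => (L k)ᴴ) Y).trace := by
  simp only [krausMap_apply, conjTranspose_conjTranspose, Finset.sum_mul, Finset.mul_sum,
    trace_sum]
  refine Finset.sum_congr rfl fun k _ => ?_
  rw [Matrix.mul_assoc, Matrix.mul_assoc, trace_mul_comm]
  simp only [Matrix.mul_assoc]

lemma trace_krausMap_eq_trace_iff [DecidableEq n] {L : κ → Matrix m n ℂ} :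
    (∀ X, (krausMap L X).trace = X.trace) ↔ ∑ k, (L k)ᴴ * L k = 1 := by
  classical
  have htrace : ∀ X, (krausMap L X).trace = (X * ∑ k, (L k)ᴴ * L k).trace := fun X => by
    simpa [krausMap_apply] using trace_krausMap_mul L X 1
  simp only [htrace, ext_iff_trace_mul_left, Matrix.mul_one]

lemma krausMap_mulVec_eq_zero_iff (L : κ → Matrix m n ℂ) {X : Matrix n n ℂ} (hX : X.PosSemidef)
    (v : m → ℂ) : krausMap L X *ᵥ v = 0 ↔ ∀ k, X *ᵥ ((L k)ᴴ *ᵥ v) = 0 := by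
  have hform : star v ⬝ᵥ krausMap L X *ᵥ v =
      ∑ k, star ((L k)ᴴ *ᵥ v) ⬝ᵥ X *ᵥ ((L k)ᴴ *ᵥ v) := by
    simp only [krausMap_apply, sum_mulVec, dotProduct_sum, ← mulVec_mulVec, star_mulVec,
      conjTranspose_conjTranspose, dotProduct_mulVec]
  rw [← (posSemidef_krausMap L hX).dotProduct_mulVec_zero_iff, hform,
    Finset.sum_eq_zero_iff_of_nonneg fun k _ => hX.dotProduct_mulVec_nonneg _]
  simp only [Finset.mem_univ, true_imp_iff, hX.dotProduct_mulVec_zero_iff]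

-- The Kadison–Schwarz inequality for the unital map adjoint to `krausMap L`: its defect is a sum
-- of squares of the terms `(L k)ᴴ Y - X (L k)ᴴ`, where `X` is the image of `Y`.
theorem posSemidef_krausMap_conjTranspose_sub [DecidableEq n] {L : κ → Matrix m n ℂ}
    (hL : ∑ k, (L k)ᴴ * L k = 1) (Y : Matrix m m ℂ) :
    (krausMap (fun k => (L k)ᴴ) (Y * Yᴴ) -
      krausMap (fun k => (L k)ᴴ) Y * (krausMap (fun k => (L k)ᴴ) Y)ᴴ).PosSemidef := by
  set X := krausMap (fun k => (L k)ᴴ) Y with hX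
  let Z : κ → Matrix n m ℂ := fun k => (L k)ᴴ * Y - X * (L k)ᴴ
  have hZ : ∀ k, Z k * (Z k)ᴴ = (L k)ᴴ * (Y * Yᴴ) * L k - ((L k)ᴴ * Y * L k) * Xᴴ -
      X * ((L k)ᴴ * Yᴴ * L k) + X * ((L k)ᴴ * L k) * Xᴴ := fun k => by
    simp only [Z, conjTranspose_sub, conjTranspose_mul, conjTranspose_conjTranspose,
      Matrix.sub_mul, Matrix.mul_sub, Matrix.mul_assoc]
    abel
  have hXsum : ∑ k, (L k)ᴴ * Y * L k = X := by simp [hX, krausMap_apply]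
  have hXsum' : ∑ k, (L k)ᴴ * Yᴴ * L k = Xᴴ := by
    rw [hX, conjTranspose_krausMap]
    simp [krausMap_apply]
  have hsum : krausMap (fun k => (L k)ᴴ) (Y * Yᴴ) - X * Xᴴ = ∑ k, Z k * (Z k)ᴴ := by
    simp only [hZ, Finset.sum_add_distrib, Finset.sum_sub_distrib, ← Finset.mul_sum,
      ← Finset.sum_mul, hL, hXsum, hXsum', krausMap_apply, conjTranspose_conjTranspose,
      Matrix.mul_one, sub_add_cancel]
  rw [hsum]
  exact posSemidef_sum _ fun k _ => posSemidef_self_mul_conjTranspose _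

end KrausMap

section Choi

variable {A B n : Type*}

lemma ptraceLeft_idTensor [Fintype n] (Φ : Matrix A A ℂ →ₗ[ℂ] Matrix B B ℂ)
    (M : Matrix (n × A) (n × A) ℂ) : ptraceLeft (idTensor n Φ M) = Φ (ptraceLeft M) := by
  have hsum : ptraceLeft M = ∑ i, Matrix.of fun a b => M (i, a) (i, b) := by
    ext a b
    simp [ptraceLeft, Matrix.sum_apply]
  rw [hsum, map_sum]
  ext x y
  simp [Matrix.sum_apply, ptraceLeft, idTensor]

lemma idTensor_one_kronecker [DecidableEq n] (Φ : Matrix A A ℂ →ₗ[ℂ] Matrix B B ℂ)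
    (X : Matrix A A ℂ) :
    idTensor n Φ ((1 : Matrix n n ℂ) ⊗ₖ X) = (1 : Matrix n n ℂ) ⊗ₖ Φ X := by
  ext ⟨i, x⟩ ⟨j, y⟩
  have hblock : (Matrix.of fun a b => ((1 : Matrix n n ℂ) ⊗ₖ X) (i, a) (j, b)) =
      (1 : Matrix n n ℂ) i j • X := rfl
  rw [idTensor, of_apply, hblock, map_smul]
  rfl

lemma idTensor_krausMap {κ : Type*} [Fintype κ] [Fintype A] [Fintype n] [DecidableEq n]
    (K : κ → Matrix B A ℂ) :
    idTensor n (krausMap K) = krausMap fun k => (1 : Matrix n n ℂ) ⊗ₖ K k := by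
  ext M ⟨i, x⟩ ⟨j, y⟩
  simp only [idTensor, of_apply, krausMap_apply, Matrix.sum_apply, Matrix.mul_apply,
    conjTranspose_apply, kroneckerMap_apply, Fintype.sum_prod_type, one_apply, ite_mul, one_mul,
    zero_mul, mul_ite, mul_zero, apply_ite star, star_zero, Finset.sum_ite_irrel,
    Finset.sum_const_zero, Finset.sum_ite_eq, Finset.mem_univ, if_true]

lemma krausMap_single_apply {κ : Type*} [Fintype κ] [Fintype A] [DecidableEq A]
    (K : κ → Matrix B A ℂ) (a b : A) (x y : B) :
    krausMap K (single a b 1) x y = ∑ k, K k x a * star (K k y b) := by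
  simp [krausMap_apply, Matrix.sum_apply, Matrix.mul_apply, single_apply, ite_and]

variable [Fintype A] [Fintype B]

lemma ptraceRight_idTensor {Φ : Matrix A A ℂ →ₗ[ℂ] Matrix B B ℂ}
    (hΦ : ∀ X, (Φ X).trace = X.trace) (M : Matrix (n × A) (n × A) ℂ) :
    ptraceRight (idTensor n Φ M) = ptraceRight M := by
  ext i j
  exact hΦ (Matrix.of fun a b => M (i, a) (j, b))

lemma trace_idTensor [Fintype n] {Φ : Matrix A A ℂ →ₗ[ℂ] Matrix B B ℂ}
    (hΦ : ∀ X, (Φ X).trace = X.trace) (M : Matrix (n × A) (n × A) ℂ) :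
    (idTensor n Φ M).trace = M.trace := by
  simp only [trace, diag_apply, Fintype.sum_prod_type]
  exact Finset.sum_congr rfl fun i _ => hΦ (Matrix.of fun a b => M (i, a) (i, b))

lemma IsCPMap.posSemidef_idTensor [Finite n] {Φ : Matrix A A ℂ →ₗ[ℂ] Matrix B B ℂ}
    (hΦ : IsCPMap Φ) {M : Matrix (n × A) (n × A) ℂ} (hM : M.PosSemidef) :
    (idTensor n Φ M).PosSemidef := by
  let e := Finite.equivFin n
  have h := hΦ _ _ (hM.submatrix (Prod.map e.symm id))
  convert h.submatrix (Prod.map e id) using 1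
  ext x y
  simp [idTensor]

/-- The Choi matrix of `Φ`, whose block at `(a, b)` is `Φ |a⟩⟨b|`. -/
def choiMatrix [DecidableEq A] (Φ : Matrix A A ℂ →ₗ[ℂ] Matrix B B ℂ) :
    Matrix (A × B) (A × B) ℂ :=
  Matrix.of fun x y => Φ (single x.1 y.1 1) x.2 y.2

-- The Choi matrix is the image of the unnormalised maximally entangled projector.
lemma IsCPMap.posSemidef_choiMatrix [DecidableEq A] {Φ : Matrix A A ℂ →ₗ[ℂ] Matrix B B ℂ}
    (hΦ : IsCPMap Φ) : (choiMatrix Φ).PosSemidef := by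
  let ω : A × A → ℂ := fun x => if x.1 = x.2 then 1 else 0
  have hchoi : choiMatrix Φ = idTensor A Φ (vecMulVec ω (star ω)) := by
    ext ⟨a, x⟩ ⟨b, y⟩
    have hblock : (Matrix.of fun a' b' => vecMulVec ω (star ω) (a, a') (b, b')) =
        single a b (1 : ℂ) := by
      ext a' b'
      by_cases ha : a = a' <;> by_cases hb : b = b' <;>
        simp [ω, vecMulVec_apply, ha, hb]
    simp only [choiMatrix, idTensor, of_apply, hblock]
  rw [hchoi]
  exact hΦ.posSemidef_idTensor (posSemidef_vecMulVec_self_star ω)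

open scoped MatrixOrder in
theorem IsCPMap.exists_eq_krausMap {Φ : Matrix A A ℂ →ₗ[ℂ] Matrix B B ℂ} (hΦ : IsCPMap Φ) :
    ∃ K : A × B → Matrix B A ℂ, Φ = krausMap K := by
  classical
  obtain ⟨C, hC⟩ := CStarAlgebra.nonneg_iff_eq_star_mul_self.1 hΦ.posSemidef_choiMatrix.nonneg
  refine ⟨fun s => Matrix.of fun x a => star (C s (a, x)), ?_⟩
  refine Matrix.ext_linearMap _ fun a b => LinearMap.ext_ring ?_
  ext x y
  calc Φ (single a b 1) x y = (star C * C) (a, x) (b, y) := by rw [← hC]; rfl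
    _ = _ := by
      simp [Matrix.mul_apply, krausMap_single_apply]

end Choi

section ResolventFunctional

variable {κ m n : Type*} [Fintype κ] [Fintype m] [Fintype n]

open scoped MatrixOrder in
lemma trace_mul_nonneg_of_posSemidef {A B : Matrix n n ℂ} (hA : A.PosSemidef)
    (hB : B.PosSemidef) : 0 ≤ (A * B).trace := by
  classical
  obtain ⟨C, rfl⟩ := CStarAlgebra.nonneg_iff_eq_star_mul_self.1 hB.nonneg
  rw [← Matrix.mul_assoc, trace_mul_comm, ← Matrix.mul_assoc]
  exact (hA.mul_mul_conjTranspose_same C).trace_nonneg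

lemma trace_mul_krausMap_mul_conjTranspose_le [DecidableEq n] {L : κ → Matrix m n ℂ}
    (hL : ∑ k, (L k)ᴴ * L k = 1) {σ : Matrix n n ℂ} (hσ : σ.PosSemidef) (Y : Matrix m m ℂ) :
    (σ * (krausMap (fun k => (L k)ᴴ) Y * (krausMap (fun k => (L k)ᴴ) Y)ᴴ)).trace ≤
      (krausMap L σ * (Y * Yᴴ)).trace := by
  rw [trace_krausMap_mul, ← sub_nonneg, ← trace_sub, ← Matrix.mul_sub]
  exact trace_mul_nonneg_of_posSemidef hσ (posSemidef_krausMap_conjTranspose_sub hL Y)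

/-- The concave quadratic functional `2 Re Tr(ρ Xᴴ) - Tr(σ X Xᴴ) - t Tr(ρ Xᴴ X)`, whose critical
points are the solutions of the resolvent equation `σ X + t X ρ = ρ` for the relative modular
operator `X ↦ σ⁻¹ X ρ`. -/
def resolventFunctional (ρ σ : Matrix n n ℂ) (t : ℝ) (X : Matrix n n ℂ) : ℝ :=
  2 * (ρ * Xᴴ).trace.re - (σ * (X * Xᴴ)).trace.re - t * (ρ * (Xᴴ * X)).trace.re

lemma resolventFunctional_krausMap_le [DecidableEq n] {L : κ → Matrix m n ℂ}
    (hL : ∑ k, (L k)ᴴ * L k = 1) {ρ σ : Matrix n n ℂ} (hρ : ρ.PosSemidef) (hσ : σ.PosSemidef)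
    {t : ℝ} (ht : 0 ≤ t) (Y : Matrix m m ℂ) :
    resolventFunctional (krausMap L ρ) (krausMap L σ) t Y ≤
      resolventFunctional ρ σ t (krausMap (fun k => (L k)ᴴ) Y) := by
  have hσY := (Complex.le_def.1 (trace_mul_krausMap_mul_conjTranspose_le hL hσ Y)).1
  have hρY := (Complex.le_def.1 (trace_mul_krausMap_mul_conjTranspose_le hL hρ Yᴴ)).1
  rw [← conjTranspose_krausMap, conjTranspose_conjTranspose, conjTranspose_conjTranspose] at hρY
  have hlin : (krausMap L ρ * Yᴴ).trace = (ρ * (krausMap (fun k => (L k)ᴴ) Y)ᴴ).trace := by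
    rw [trace_krausMap_mul, conjTranspose_krausMap]
  rw [resolventFunctional, resolventFunctional, hlin]
  gcongr

-- Completing the square around a solution of the resolvent equation.
lemma resolventFunctional_add {ρ σ X : Matrix n n ℂ} (hρ : ρ.IsHermitian) (hσ : σ.IsHermitian)
    {t : ℝ} (hX : σ * X + t • (X * ρ) = ρ) (Z : Matrix n n ℂ) :
    resolventFunctional ρ σ t (X + Z) =
      (ρ * Xᴴ).trace.re - (σ * (Z * Zᴴ)).trace.re - t * (ρ * (Zᴴ * Z)).trace.re := by
  have hcrit (W : Matrix n n ℂ) :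
      (σ * (X * Wᴴ)).trace.re + t * (ρ * (Wᴴ * X)).trace.re = (ρ * Wᴴ).trace.re := by
    conv_rhs => rw [← hX]
    rw [Matrix.add_mul, Matrix.smul_mul, trace_add, trace_smul, ← Matrix.mul_assoc ρ,
      trace_mul_comm (ρ * Wᴴ), Complex.add_re, Complex.smul_re, smul_eq_mul, Matrix.mul_assoc,
      Matrix.mul_assoc]
  have hσ_symm : (σ * (Z * Xᴴ)).trace.re = (σ * (X * Zᴴ)).trace.re := by
    rw [← Complex.conj_re, ← Complex.star_def, ← trace_conjTranspose, trace_mul_comm σ (X * Zᴴ)]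
    simp only [conjTranspose_mul, conjTranspose_conjTranspose, hσ.eq]
  have hρ_symm : (ρ * (Xᴴ * Z)).trace.re = (ρ * (Zᴴ * X)).trace.re := by
    rw [← Complex.conj_re, ← Complex.star_def, ← trace_conjTranspose, trace_mul_comm ρ (Zᴴ * X)]
    simp only [conjTranspose_mul, conjTranspose_conjTranspose, hρ.eq]
  simp only [resolventFunctional, conjTranspose_add, Matrix.mul_add, Matrix.add_mul, trace_add,
    Complex.add_re]
  linear_combination -hcrit X - 2 * hcrit Z - hσ_symm - t * hρ_symm

lemma resolventFunctional_of_resolvent_eq {ρ σ X : Matrix n n ℂ} (hρ : ρ.IsHermitian)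
    (hσ : σ.IsHermitian) {t : ℝ} (hX : σ * X + t • (X * ρ) = ρ) :
    resolventFunctional ρ σ t X = (ρ * Xᴴ).trace.re := by
  simpa using resolventFunctional_add hρ hσ hX 0

lemma resolventFunctional_le_of_resolvent_eq {ρ σ X : Matrix n n ℂ} (hρ : ρ.PosSemidef)
    (hσ : σ.PosSemidef) {t : ℝ} (ht : 0 ≤ t) (hX : σ * X + t • (X * ρ) = ρ)
    (Y : Matrix n n ℂ) : resolventFunctional ρ σ t Y ≤ (ρ * Xᴴ).trace.re := by
  have hσZ := (Complex.le_def.1 (trace_mul_nonneg_of_posSemidef hσ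
    (posSemidef_self_mul_conjTranspose (Y - X)))).1
  have hρZ := (Complex.le_def.1 (trace_mul_nonneg_of_posSemidef hρ
    (posSemidef_conjTranspose_mul_self (Y - X)))).1
  have hsq := resolventFunctional_add hρ.1 hσ.1 hX (Y - X)
  rw [add_sub_cancel] at hsq
  rw [Complex.zero_re] at hσZ hρZ
  linarith [mul_nonneg ht hρZ]

theorem re_trace_krausMap_mul_conjTranspose_le [DecidableEq n] {L : κ → Matrix m n ℂ}
    (hL : ∑ k, (L k)ᴴ * L k = 1) {ρ σ X : Matrix n n ℂ} {X' : Matrix m m ℂ}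
    (hρ : ρ.PosSemidef) (hσ : σ.PosSemidef) {t : ℝ} (ht : 0 ≤ t)
    (hX : σ * X + t • (X * ρ) = ρ)
    (hX' : krausMap L σ * X' + t • (X' * krausMap L ρ) = krausMap L ρ) :
    (krausMap L ρ * X'ᴴ).trace.re ≤ (ρ * Xᴴ).trace.re :=
  calc (krausMap L ρ * X'ᴴ).trace.re
      = resolventFunctional (krausMap L ρ) (krausMap L σ) t X' :=
        (resolventFunctional_of_resolvent_eq (posSemidef_krausMap L hρ).1
          (posSemidef_krausMap L hσ).1 hX').symm
    _ ≤ resolventFunctional ρ σ t (krausMap (fun k => (L k)ᴴ) X') :=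
        resolventFunctional_krausMap_le hL hρ hσ ht X'
    _ ≤ (ρ * Xᴴ).trace.re := resolventFunctional_le_of_resolvent_eq hρ hσ ht hX _

end ResolventFunctional

section RelativeModularOperator

variable {n : Type*} [Fintype n] [DecidableEq n] {ρ σ : Matrix n n ℂ}

/-- The unitary matrix of inner products `⟨v j, u i⟩` between the eigenbases `u` of `ρ` and `v` of
`σ`. -/
def eigenvectorOverlap (hρ : ρ.IsHermitian) (hσ : σ.IsHermitian) : Matrix n n ℂ :=
  star (hσ.eigenvectorUnitary : Matrix n n ℂ) * hρ.eigenvectorUnitary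

/-- The eigenvalues of the relative modular operator `X ↦ σ⁻¹ X ρ`; an eigenvalue `0` of `σ`
contributes the junk value `0`. -/
def modularRatio (hρ : ρ.IsHermitian) (hσ : σ.IsHermitian) (x : n × n) : ℝ :=
  hρ.eigenvalues x.1 / hσ.eigenvalues x.2

/-- The weights of the spectral measure of the relative modular operator `X ↦ σ⁻¹ X ρ` that express
traces against `ρ`: the first Nussbaum–Szkoła distribution of the pair `(ρ, σ)`. -/
def modularWeight (hρ : ρ.IsHermitian) (hσ : σ.IsHermitian) (x : n × n) : ℝ :=
  ‖eigenvectorOverlap hρ hσ x.2 x.1‖ ^ 2 * hρ.eigenvalues x.1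

lemma modularRatio_nonneg (hρ : ρ.PosSemidef) (hσ : σ.PosSemidef) (x : n × n) :
    0 ≤ modularRatio hρ.1 hσ.1 x :=
  div_nonneg (hρ.eigenvalues_nonneg _) (hσ.eigenvalues_nonneg _)

lemma cfc_eq_eigenvectorUnitary_mul (hρ : ρ.IsHermitian) (f : ℝ → ℝ) :
    cfc f ρ = (hρ.eigenvectorUnitary : Matrix n n ℂ) *
      diagonal (fun i => (f (hρ.eigenvalues i) : ℂ)) *
      star (hρ.eigenvectorUnitary : Matrix n n ℂ) :=
  hρ.cfc_eq f

lemma eq_eigenvectorUnitary_mul_diagonal_mul (hρ : ρ.IsHermitian) :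
    ρ = (hρ.eigenvectorUnitary : Matrix n n ℂ) * diagonal (fun i => (hρ.eigenvalues i : ℂ)) *
      star (hρ.eigenvectorUnitary : Matrix n n ℂ) :=
  (cfc_id ℝ ρ hρ.isSelfAdjoint).symm.trans (cfc_eq_eigenvectorUnitary_mul hρ id)

lemma trace_cfc_mul_cfc (hρ : ρ.IsHermitian) (hσ : σ.IsHermitian) (f g : ℝ → ℝ) :
    (cfc f ρ * cfc g σ).trace.re = ∑ x : n × n, ‖eigenvectorOverlap hρ hσ x.2 x.1‖ ^ 2 *
      (f (hρ.eigenvalues x.1) * g (hσ.eigenvalues x.2)) := by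
  have htrace : (cfc f ρ * cfc g σ).trace =
      (diagonal (fun i => (f (hρ.eigenvalues i) : ℂ)) * (eigenvectorOverlap hρ hσ)ᴴ *
        (diagonal (fun j => (g (hσ.eigenvalues j) : ℂ)) * eigenvectorOverlap hρ hσ)).trace := by
    rw [cfc_eq_eigenvectorUnitary_mul hρ, cfc_eq_eigenvectorUnitary_mul hσ, eigenvectorOverlap,
      conjTranspose_mul, star_eq_conjTranspose, star_eq_conjTranspose,
      conjTranspose_conjTranspose]
    simp only [Matrix.mul_assoc]
    rw [trace_mul_comm]
    simp only [Matrix.mul_assoc]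
  rw [htrace, trace, Complex.re_sum, Fintype.sum_prod_type]
  refine Finset.sum_congr rfl fun i _ => ?_
  rw [diag_apply, Matrix.mul_apply, Complex.re_sum]
  refine Finset.sum_congr rfl fun j _ => ?_
  rw [diagonal_mul, diagonal_mul, conjTranspose_apply, ← Complex.ofReal_re (_ * _)]
  congr 1
  push_cast
  rw [← Complex.mul_conj', ← Complex.star_def]
  ring

lemma cfc_id_mul (hρ : ρ.IsHermitian) (f : ℝ → ℝ) :
    cfc (fun x => x * f x) ρ = ρ * cfc f ρ := by
  rw [cfc_mul (fun x => x) f ρ continuousOn_id (Matrix.finite_real_spectrum.continuousOn f),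
    cfc_id' ℝ ρ hρ.isSelfAdjoint]

lemma sum_modularWeight (hρ : ρ.IsHermitian) (hσ : σ.IsHermitian) :
    ∑ x, modularWeight hρ hσ x = ρ.trace.re := by
  have h := trace_cfc_mul_cfc hρ hσ id 1
  rw [cfc_id ℝ ρ hρ.isSelfAdjoint, cfc_one ℝ σ hσ.isSelfAdjoint, Matrix.mul_one] at h
  simpa [modularWeight] using h.symm

lemma eigenvectorUnitary_mul_eigenvectorOverlap (hρ : ρ.IsHermitian) (hσ : σ.IsHermitian) :
    (hσ.eigenvectorUnitary : Matrix n n ℂ) * eigenvectorOverlap hρ hσ = hρ.eigenvectorUnitary := by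
  rw [eigenvectorOverlap, ← Matrix.mul_assoc,
    Unitary.mul_star_self_of_mem hσ.eigenvectorUnitary.2, Matrix.one_mul]

lemma eigenvectorOverlap_mul_diagonal (hρ : ρ.IsHermitian) (hσ : σ.IsHermitian) :
    eigenvectorOverlap hρ hσ * diagonal (fun i => (hρ.eigenvalues i : ℂ)) =
      star (hσ.eigenvectorUnitary : Matrix n n ℂ) * ρ * hρ.eigenvectorUnitary := by
  have hU : ρ * hρ.eigenvectorUnitary = (hρ.eigenvectorUnitary : Matrix n n ℂ) *
      diagonal (fun i => (hρ.eigenvalues i : ℂ)) := by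
    conv_lhs => enter [1]; rw [eq_eigenvectorUnitary_mul_diagonal_mul hρ]
    rw [Matrix.mul_assoc, Unitary.coe_star_mul_self, Matrix.mul_one]
  rw [eigenvectorOverlap, Matrix.mul_assoc, Matrix.mul_assoc, hU]

lemma eigenvectorOverlap_mul_eigenvalues_eq_zero (hρ : ρ.IsHermitian) (hσ : σ.IsHermitian)
    (hker : ∀ v, σ *ᵥ v = 0 → ρ *ᵥ v = 0) {j : n} (hj : hσ.eigenvalues j = 0) (i : n) :
    eigenvectorOverlap hρ hσ j i * hρ.eigenvalues i = 0 := by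
  have hσv : σ *ᵥ (hσ.eigenvectorUnitary : Matrix n n ℂ).col j = 0 := by
    have h := hσ.mulVec_eigenvectorBasis j
    rw [hj, zero_smul] at h
    exact h
  have hρv (k : n) : (star (hσ.eigenvectorUnitary : Matrix n n ℂ) * ρ) j k = 0 := by
    rw [← hρ.eq, star_eq_conjTranspose, ← conjTranspose_mul, conjTranspose_apply,
      show (ρ * (hσ.eigenvectorUnitary : Matrix n n ℂ)) k j = 0 from congrFun (hker _ hσv) k,
      star_zero]
  have hentry := congrFun₂ (eigenvectorOverlap_mul_diagonal hρ hσ) j i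
  rw [mul_diagonal, Matrix.mul_apply] at hentry
  rw [hentry]
  exact Finset.sum_eq_zero fun k _ => by rw [hρv, zero_mul]

lemma modularWeight_eq_zero_of_eigenvalues_eq_zero (hρ : ρ.IsHermitian) (hσ : σ.IsHermitian)
    (hker : ∀ v, σ *ᵥ v = 0 → ρ *ᵥ v = 0) {x : n × n} (hx : hσ.eigenvalues x.2 = 0) :
    modularWeight hρ hσ x = 0 := by
  have h := eigenvectorOverlap_mul_eigenvalues_eq_zero hρ hσ hker hx x.1
  simpa [modularWeight] using h

lemma modularWeight_eq_zero_of_modularRatio_eq_zero (hρ : ρ.IsHermitian) (hσ : σ.IsHermitian)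
    (hker : ∀ v, σ *ᵥ v = 0 → ρ *ᵥ v = 0) {x : n × n} (hx : modularRatio hρ hσ x = 0) :
    modularWeight hρ hσ x = 0 := by
  rcases div_eq_zero_iff.1 hx with hp | hq
  · rw [modularWeight, hp, mul_zero]
  · exact modularWeight_eq_zero_of_eigenvalues_eq_zero hρ hσ hker hq

/-- A solution `X` of the resolvent equation `σ X + t X ρ = ρ`, written as a matrix `⟨v j, X u i⟩`
in the eigenbases `v` of `σ` and `u` of `ρ`. -/
def resolventSolution (hρ : ρ.IsHermitian) (hσ : σ.IsHermitian) (t : ℝ) : Matrix n n ℂ :=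
  Matrix.of fun j i => eigenvectorOverlap hρ hσ j i *
    ((modularRatio hρ hσ (i, j) / (1 + t * modularRatio hρ hσ (i, j)) : ℝ) : ℂ)

lemma diagonal_mul_resolventSolution_add (hρ : ρ.PosSemidef) (hσ : σ.PosSemidef)
    (hker : ∀ v, σ *ᵥ v = 0 → ρ *ᵥ v = 0) {t : ℝ} (ht : 0 ≤ t) :
    diagonal (fun j => (hσ.1.eigenvalues j : ℂ)) * resolventSolution hρ.1 hσ.1 t +
        t • (resolventSolution hρ.1 hσ.1 t * diagonal fun i => (hρ.1.eigenvalues i : ℂ)) =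
      eigenvectorOverlap hρ.1 hσ.1 * diagonal fun i => (hρ.1.eigenvalues i : ℂ) := by
  ext j i
  rw [Matrix.add_apply, Matrix.smul_apply, diagonal_mul, mul_diagonal, mul_diagonal,
    resolventSolution, of_apply, Complex.real_smul]
  by_cases hq : hσ.1.eigenvalues j = 0
  · rw [eigenvectorOverlap_mul_eigenvalues_eq_zero hρ.1 hσ.1 hker hq]
    simp [modularRatio, hq]
  · have hr := modularRatio_nonneg hρ hσ (i, j)
    have hp : hρ.1.eigenvalues i = modularRatio hρ.1 hσ.1 (i, j) * hσ.1.eigenvalues j :=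
      (div_mul_cancel₀ _ hq).symm
    have hscalar : hσ.1.eigenvalues j *
        (modularRatio hρ.1 hσ.1 (i, j) / (1 + t * modularRatio hρ.1 hσ.1 (i, j))) +
        t * (modularRatio hρ.1 hσ.1 (i, j) / (1 + t * modularRatio hρ.1 hσ.1 (i, j)) *
          hρ.1.eigenvalues i) = hρ.1.eigenvalues i := by
      rw [hp]
      field_simp
    conv_rhs => rw [← hscalar]
    push_cast
    ring

lemma re_trace_eigenvectorOverlap_mul_resolventSolution (hρ : ρ.IsHermitian)
    (hσ : σ.IsHermitian) (t : ℝ) :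
    (eigenvectorOverlap hρ hσ * diagonal (fun i => (hρ.eigenvalues i : ℂ)) *
        (resolventSolution hρ hσ t)ᴴ).trace.re =
      ∑ x, modularWeight hρ hσ x *
        (modularRatio hρ hσ x / (1 + t * modularRatio hρ hσ x)) := by
  rw [Fintype.sum_prod_type_right, trace, Complex.re_sum]
  refine Finset.sum_congr rfl fun j _ => ?_
  rw [diag_apply, Matrix.mul_apply, Complex.re_sum]
  refine Finset.sum_congr rfl fun i _ => ?_
  rw [mul_diagonal, conjTranspose_apply, resolventSolution, of_apply, modularWeight, star_mul',
    Complex.star_def, Complex.conj_ofReal,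
    ← Complex.ofReal_re (‖eigenvectorOverlap hρ hσ j i‖ ^ 2 * _ * _)]
  congr 1
  push_cast
  rw [← Complex.mul_conj']
  ring

theorem exists_resolvent_eq_and_trace_eq (hρ : ρ.PosSemidef) (hσ : σ.PosSemidef)
    (hker : ∀ v, σ *ᵥ v = 0 → ρ *ᵥ v = 0) {t : ℝ} (ht : 0 ≤ t) :
    ∃ X, σ * X + t • (X * ρ) = ρ ∧ (ρ * Xᴴ).trace.re = ∑ x, modularWeight hρ.1 hσ.1 x *
      (modularRatio hρ.1 hσ.1 x / (1 + t * modularRatio hρ.1 hσ.1 x)) := by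
  let U : Matrix n n ℂ := hρ.1.eigenvectorUnitary.1
  let V : Matrix n n ℂ := hσ.1.eigenvectorUnitary.1
  let P : Matrix n n ℂ := diagonal fun i => (hρ.1.eigenvalues i : ℂ)
  let S : Matrix n n ℂ := diagonal fun j => (hσ.1.eigenvalues j : ℂ)
  let G := eigenvectorOverlap hρ.1 hσ.1
  let Y := resolventSolution hρ.1 hσ.1 t
  have hU (M : Matrix n n ℂ) : star U * (U * M) = M := by
    rw [← Matrix.mul_assoc, Unitary.coe_star_mul_self, Matrix.one_mul]
  have hV (M : Matrix n n ℂ) : star V * (V * M) = M := by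
    rw [← Matrix.mul_assoc, Unitary.coe_star_mul_self, Matrix.one_mul]
  have hρU : ρ = U * P * star U := eq_eigenvectorUnitary_mul_diagonal_mul hρ.1
  have hσV : σ = V * S * star V := eq_eigenvectorUnitary_mul_diagonal_mul hσ.1
  have hρG : ρ = V * (G * P) * star U := by
    rw [← Matrix.mul_assoc, eigenvectorUnitary_mul_eigenvectorOverlap, ← hρU]
  refine ⟨V * Y * star U, ?_, ?_⟩
  · have hσX : σ * (V * Y * star U) = V * (S * Y) * star U := by
      rw [hσV]
      simp only [Matrix.mul_assoc, hV]
    have hXρ : V * Y * star U * ρ = V * (Y * P) * star U := by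
      rw [hρU]
      simp only [Matrix.mul_assoc, hU]
    rw [hσX, hXρ, ← Matrix.smul_mul, ← Matrix.mul_smul, ← Matrix.add_mul, ← Matrix.mul_add,
      diagonal_mul_resolventSolution_add hρ hσ hker ht, ← hρG]
  · have hρX : ρ * (V * Y * star U)ᴴ = V * (G * P * Yᴴ * star V) := by
      rw [hρG]
      simp only [conjTranspose_mul, star_eq_conjTranspose, conjTranspose_conjTranspose,
        Matrix.mul_assoc] at hU ⊢
      rw [hU]
    rw [hρX, trace_mul_comm, Matrix.mul_assoc, Unitary.coe_star_mul_self, Matrix.mul_one]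
    exact re_trace_eigenvectorOverlap_mul_resolventSolution hρ.1 hσ.1 t

/-- The Umegaki relative entropy `D(ρ‖σ) = Tr[ρ (log ρ - log σ)]`, which is the usual one as long as
the kernel of `σ` is contained in that of `ρ` (otherwise the convention is `D(ρ‖σ) = ∞`). -/
def relEntropy (ρ σ : Matrix n n ℂ) : ℝ :=
  (ρ * (cfc Real.log ρ - cfc Real.log σ)).trace.re

lemma relEntropy_eq_sum (hρ : ρ.IsHermitian) (hσ : σ.IsHermitian)
    (hker : ∀ v, σ *ᵥ v = 0 → ρ *ᵥ v = 0) :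
    relEntropy ρ σ = ∑ x, modularWeight hρ hσ x * Real.log (modularRatio hρ hσ x) := by
  have hρlog : (ρ * cfc Real.log ρ).trace.re =
      ∑ x, modularWeight hρ hσ x * Real.log (hρ.eigenvalues x.1) := by
    have h := trace_cfc_mul_cfc hρ hσ (fun x => x * Real.log x) 1
    rw [cfc_id_mul hρ, cfc_one ℝ σ hσ.isSelfAdjoint, Matrix.mul_one] at h
    simpa [modularWeight, mul_assoc] using h
  have hσlog : (ρ * cfc Real.log σ).trace.re =
      ∑ x, modularWeight hρ hσ x * Real.log (hσ.eigenvalues x.2) := by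
    have h := trace_cfc_mul_cfc hρ hσ id Real.log
    rw [cfc_id ℝ ρ hρ.isSelfAdjoint] at h
    simpa [modularWeight, mul_assoc] using h
  rw [relEntropy, Matrix.mul_sub, trace_sub, Complex.sub_re, hρlog, hσlog,
    ← Finset.sum_sub_distrib]
  refine Finset.sum_congr rfl fun x _ => ?_
  rw [← mul_sub, modularRatio]
  by_cases hq : hσ.eigenvalues x.2 = 0
  · simp [modularWeight_eq_zero_of_eigenvalues_eq_zero hρ hσ hker hq]
  by_cases hp : hρ.eigenvalues x.1 = 0
  · simp [modularWeight, hp]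
  rw [Real.log_div hp hq]

theorem relEntropy_krausMap_le {κ m : Type*} [Fintype κ] [Fintype m] [DecidableEq m]
    {L : κ → Matrix m n ℂ} (hL : ∑ k, (L k)ᴴ * L k = 1) (hρ : ρ.PosSemidef)
    (hσ : σ.PosSemidef) (hker : ∀ v, σ *ᵥ v = 0 → ρ *ᵥ v = 0) :
    relEntropy (krausMap L ρ) (krausMap L σ) ≤ relEntropy ρ σ := by
  have hρ' := posSemidef_krausMap L hρ
  have hσ' := posSemidef_krausMap L hσ
  have hker' (v : m → ℂ) (hv : krausMap L σ *ᵥ v = 0) : krausMap L ρ *ᵥ v = 0 :=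
    (krausMap_mulVec_eq_zero_iff L hρ v).2 fun k =>
      hker _ ((krausMap_mulVec_eq_zero_iff L hσ v).1 hv k)
  rw [relEntropy_eq_sum hρ'.1 hσ'.1 hker', relEntropy_eq_sum hρ.1 hσ.1 hker]
  refine sum_mul_log_le_of_sum_mul_resolvent_le (modularRatio_nonneg hρ hσ)
    (fun _ => modularWeight_eq_zero_of_modularRatio_eq_zero hρ.1 hσ.1 hker)
    (modularRatio_nonneg hρ' hσ')
    (fun _ => modularWeight_eq_zero_of_modularRatio_eq_zero hρ'.1 hσ'.1 hker') ?_ fun t ht => ?_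
  · rw [sum_modularWeight, sum_modularWeight, trace_krausMap_eq_trace_iff.2 hL]
  · obtain ⟨X, hX, hXsum⟩ := exists_resolvent_eq_and_trace_eq hρ hσ hker ht.le
    obtain ⟨X', hX', hXsum'⟩ := exists_resolvent_eq_and_trace_eq hρ' hσ' hker' ht.le
    rw [← hXsum, ← hXsum']
    exact re_trace_krausMap_mul_conjTranspose_le hL hρ hσ ht.le hX hX'

end RelativeModularOperator

section Bipartite

variable {A B : Type*} [Fintype A]

lemma ptraceLeft_eq_krausMap [Fintype B] [DecidableEq A] [DecidableEq B] :
    ptraceLeft = krausMap fun a : A => (1 : Matrix (A × B) (A × B) ℂ).submatrix (a, ·) id := by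
  ext M x y
  simp [krausMap_apply, ptraceLeft, Matrix.sum_apply, Matrix.mul_apply, one_apply]

lemma posSemidef_ptraceLeft [Finite B] {ρ : Matrix (A × B) (A × B) ℂ} (hρ : ρ.PosSemidef) :
    (ptraceLeft ρ).PosSemidef := by
  classical
  have := Fintype.ofFinite B
  rw [ptraceLeft_eq_krausMap]
  exact posSemidef_krausMap _ hρ

variable [DecidableEq A] [Fintype B]

lemma trace_mul_one_kronecker (M : Matrix (A × B) (A × B) ℂ) (X : Matrix B B ℂ) :
    (M * ((1 : Matrix A A ℂ) ⊗ₖ X)).trace = (ptraceLeft M * X).trace := by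
  simp only [trace, diag_apply, Matrix.mul_apply, ptraceLeft, of_apply, Fintype.sum_prod_type,
    kroneckerMap_apply, one_apply, ite_mul, one_mul, zero_mul, mul_ite, mul_zero, Finset.sum_mul,
    Finset.sum_ite_irrel, Finset.sum_const_zero, Finset.sum_ite_eq', Finset.mem_univ, if_true]
  rw [Finset.sum_comm]
  exact Finset.sum_congr rfl fun b _ => Finset.sum_comm

lemma one_kronecker_mulVec_apply (X : Matrix B B ℂ) (v : A × B → ℂ) (a : A) (b : B) :
    (((1 : Matrix A A ℂ) ⊗ₖ X) *ᵥ v) (a, b) = (X *ᵥ fun b => v (a, b)) b := by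
  simp [mulVec, dotProduct, Fintype.sum_prod_type, one_apply]

lemma mulVec_eq_zero_of_one_kronecker_ptraceLeft {ρ : Matrix (A × B) (A × B) ℂ}
    (hρ : ρ.PosSemidef) (v : A × B → ℂ)
    (hv : ((1 : Matrix A A ℂ) ⊗ₖ ptraceLeft ρ) *ᵥ v = 0) : ρ *ᵥ v = 0 := by
  classical
  let E (a : A) : Matrix B (A × B) ℂ := (1 : Matrix (A × B) (A × B) ℂ).submatrix (a, ·) id
  have hblocks : v = ∑ a, (E a)ᴴ *ᵥ fun b => v (a, b) := by
    ext x
    simp [E, Finset.sum_apply, mulVec, dotProduct, one_apply, ← Fintype.sum_prod_type']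
  have hker (a : A) : krausMap E ρ *ᵥ (fun b => v (a, b)) = 0 := by
    rw [← ptraceLeft_eq_krausMap]
    ext b
    rw [← one_kronecker_mulVec_apply, hv]
    rfl
  rw [hblocks, mulVec_sum]
  exact Finset.sum_eq_zero fun a _ => (krausMap_mulVec_eq_zero_iff E hρ _).1 (hker a) a

variable [DecidableEq B]

lemma cfc_one_kronecker {X : Matrix B B ℂ} (hX : X.IsHermitian) (f : ℝ → ℝ) :
    cfc f ((1 : Matrix A A ℂ) ⊗ₖ X) = (1 : Matrix A A ℂ) ⊗ₖ cfc f X := by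
  let φ : Matrix B B ℂ →⋆ₐ[ℂ] Matrix (A × B) (A × B) ℂ :=
    { toFun := fun X => (1 : Matrix A A ℂ) ⊗ₖ X
      map_one' := one_kronecker_one
      map_mul' := fun X Y => by rw [← mul_kronecker_mul, Matrix.one_mul]
      map_zero' := kronecker_zero _
      map_add' := kronecker_add _
      commutes' := fun r => by
        rw [Algebra.algebraMap_eq_smul_one, kronecker_smul, one_kronecker_one,
          Algebra.algebraMap_eq_smul_one]
      map_star' := fun X => by
        rw [star_eq_conjTranspose, star_eq_conjTranspose, conjTranspose_kronecker,
          conjTranspose_one] }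
  have hφ : Continuous φ := φ.toLinearMap.continuous_of_finiteDimensional
  exact (φ.map_cfc f X (Matrix.finite_real_spectrum.continuousOn f) hφ hX.isSelfAdjoint
    (hX.isSelfAdjoint.map φ)).symm

lemma vnEntropy_eq_neg_trace {n : Type*} [Fintype n] [DecidableEq n] {ρ : Matrix n n ℂ}
    (hρ : ρ.IsHermitian) : vnEntropy ρ = -(ρ * cfc Real.log ρ).trace.re := by
  rw [← cfc_id_mul hρ, cfc_eq_eigenvectorUnitary_mul hρ, trace_mul_comm, ← Matrix.mul_assoc,
    Unitary.coe_star_mul_self, Matrix.one_mul, vnEntropy, dif_pos hρ, trace_diagonal,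
    Complex.re_sum, ← Finset.sum_neg_distrib]
  simp only [Complex.ofReal_re, Real.negMulLog, neg_mul]

lemma relEntropy_one_kronecker_ptraceLeft {ρ : Matrix (A × B) (A × B) ℂ} (hρ : ρ.PosSemidef) :
    relEntropy ρ ((1 : Matrix A A ℂ) ⊗ₖ ptraceLeft ρ) = vnEntropy (ptraceLeft ρ) - vnEntropy ρ := by
  have hρ_left := (posSemidef_ptraceLeft hρ).1
  rw [relEntropy, cfc_one_kronecker hρ_left, Matrix.mul_sub, trace_sub, trace_mul_one_kronecker,
    Complex.sub_re, vnEntropy_eq_neg_trace hρ_left, vnEntropy_eq_neg_trace hρ.1]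
  ring

lemma mutualInfo_eq_vnEntropy_add_relEntropy {ρ : Matrix (A × B) (A × B) ℂ} (hρ : ρ.PosSemidef) :
    mutualInfo ρ =
      vnEntropy (ptraceRight ρ) + relEntropy ρ ((1 : Matrix A A ℂ) ⊗ₖ ptraceLeft ρ) := by
  rw [relEntropy_one_kronecker_ptraceLeft hρ, mutualInfo, add_sub_assoc]

theorem IsCPTP.relEntropy_idTensor_le {B' : Type*} [Fintype B'] [DecidableEq B']
    {Φ : Matrix B B ℂ →ₗ[ℂ] Matrix B' B' ℂ} (hΦ : IsCPTP Φ) {ρ σ : Matrix (A × B) (A × B) ℂ}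
    (hρ : ρ.PosSemidef) (hσ : σ.PosSemidef) (hker : ∀ v, σ *ᵥ v = 0 → ρ *ᵥ v = 0) :
    relEntropy (idTensor A Φ ρ) (idTensor A Φ σ) ≤ relEntropy ρ σ := by
  have htrace := trace_idTensor (n := A) hΦ.2
  obtain ⟨K, rfl⟩ := hΦ.1.exists_eq_krausMap
  rw [idTensor_krausMap] at htrace ⊢
  exact relEntropy_krausMap_le (trace_krausMap_eq_trace_iff.1 htrace) hρ hσ hker

end Bipartite

theorem stmt3_general {R Q Q' : Type*} [Fintype R] [DecidableEq R] [Fintype Q] [DecidableEq Q]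
    [Fintype Q'] [DecidableEq Q'] (ρ : Matrix (R × Q) (R × Q) ℂ) (hρ : ρ.PosSemidef)
    (ℰ : Matrix Q Q ℂ →ₗ[ℂ] Matrix Q' Q' ℂ) (hℰ : IsCPTP ℰ) :
    mutualInfo (idTensor R ℰ ρ) ≤ mutualInfo ρ := by
  have hσ := PosSemidef.one.kronecker (x := (1 : Matrix R R ℂ)) (posSemidef_ptraceLeft hρ)
  have hmono := hℰ.relEntropy_idTensor_le hρ hσ (mulVec_eq_zero_of_one_kronecker_ptraceLeft hρ)
  rw [idTensor_one_kronecker, ← ptraceLeft_idTensor] at hmono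
  rw [mutualInfo_eq_vnEntropy_add_relEntropy hρ,
    mutualInfo_eq_vnEntropy_add_relEntropy (hℰ.1.posSemidef_idTensor hρ),
    ptraceRight_idTensor hℰ.2]
  exact add_le_add_right hmono _

/-- Quantum data-processing inequality: local CPTP post-processing
cannot increase the quantum mutual information with a reference. -/
theorem stmt3 {R Q Q' : Type} [Fintype R] [DecidableEq R] [Fintype Q] [DecidableEq Q]
    [Fintype Q'] [DecidableEq Q']
    (ρ : Matrix (R × Q) (R × Q) ℂ) (hρ : IsState ρ)
    (ℰ : Matrix Q Q ℂ →ₗ[ℂ] Matrix Q' Q' ℂ) (hℰ : IsCPTP ℰ) :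
    mutualInfo (idTensor R ℰ ρ) ≤ mutualInfo ρ :=
  stmt3_general ρ hρ.1 ℰ hℰ
end
end

section
/- Let ρ_RQE = Σ_{x∈X} q_x ω^x_R ⊗ ζ^x_{QE} be a state on H_R⊗H_Q⊗H_E, where X is a finite index set, (q_x) is a probability vector, each ω^x_R is a state on H_R, each ζ^x_{QE} is a state on H_Q⊗H_E, and there exist mutually orthogonal projectors {P^x}_{x∈X} on H_Q such that (P^x⊗1_E) ζ^x_{QE} (P^x⊗1_E) = ζ^x_{QE} for each x. Then I(R;E|Q)_ρ = 0. -/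
open Matrix Kronecker ComplexOrder

noncomputable section

/-!
Write `S(A|B) = S(ρ_AB) - S(ρ_B)`, so that `I(R;E|Q) = S(R|Q) - S(R|QE)`. When the blocks `N_i` are
orthogonal, the entropy of `∑ M_i ⊗ N_i` splits over `i`, and the entropies of the `N_i` cancel in
`S(A|B)`: what remains depends on the `N_i` only through their traces. Discarding `E` preserves
these traces, and blocks that are orthogonal after discarding `E` were so before, since a positive
`ρ` satisfies `ker (ρ_Q ⊗ 1) ⊆ ker ρ`. Hence `S(R|QE) = S(R|Q)`.
-/

section Entropy

variable {ι m n : Type*} [Fintype m] [DecidableEq m] [Fintype n] [DecidableEq n]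

theorem vnEntropy_eq_sum_roots_charpoly {A : Matrix n n ℂ} (hA : A.IsHermitian) :
    vnEntropy A = (A.charpoly.roots.map fun z => Real.negMulLog z.re).sum := by
  rw [vnEntropy, dif_pos hA, hA.roots_charpoly_eq_eigenvalues, Multiset.map_map]
  simp only [Function.comp_def, RCLike.ofReal_eq_complex_ofReal, Complex.ofReal_re]
  rfl

theorem vnEntropy_unitary_conj_diagonal (U : unitaryGroup n ℂ) (d : n → ℝ) :
    vnEntropy (U.1 * diagonal (fun i => (d i : ℂ)) * star U.1) = ∑ i, Real.negMulLog (d i) := by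
  have hHerm : (U.1 * diagonal (fun i => (d i : ℂ)) * star U.1).IsHermitian :=
    isHermitian_mul_mul_conjTranspose U.1
      (isHermitian_diagonal_of_self_adjoint _ (funext fun i => Complex.conj_ofReal (d i)))
  rw [vnEntropy_eq_sum_roots_charpoly hHerm, charpoly_mul_comm, ← mul_assoc,
    Unitary.coe_star_mul_self, one_mul, charpoly_diagonal,
    Polynomial.roots_prod _ _ (Finset.prod_ne_zero_iff.mpr fun _ _ => Polynomial.X_sub_C_ne_zero _)]
  simp only [Polynomial.roots_X_sub_C, Multiset.bind_singleton, Multiset.map_map,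
    Function.comp_def, Complex.ofReal_re]
  rfl

theorem re_trace_unitary_conj_diagonal (U : unitaryGroup n ℂ) (d : n → ℝ) :
    (U.1 * diagonal (fun i => (d i : ℂ)) * star U.1).trace.re = ∑ i, d i := by
  rw [trace_mul_cycle, Unitary.coe_star_mul_self, one_mul, trace_diagonal, Complex.re_sum]
  simp only [Complex.ofReal_re]

theorem exists_eq_unitary_conj_diagonal {A : Matrix n n ℂ} (hA : A.IsHermitian) :
    ∃ (U : unitaryGroup n ℂ) (d : n → ℝ), A = U.1 * diagonal (fun i => (d i : ℂ)) * star U.1 :=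
  ⟨hA.eigenvectorUnitary, hA.eigenvalues, hA.spectral_theorem⟩

theorem vnEntropy_smul (t : ℝ) {A : Matrix n n ℂ} (hA : A.IsHermitian) :
    vnEntropy ((t : ℂ) • A) = t * vnEntropy A + A.trace.re * Real.negMulLog t := by
  obtain ⟨U, d, rfl⟩ := exists_eq_unitary_conj_diagonal hA
  have hsmul : (t : ℂ) • (U.1 * diagonal (fun i => (d i : ℂ)) * star U.1) =
      U.1 * diagonal (fun i => ((t * d i : ℝ) : ℂ)) * star U.1 := by
    rw [← smul_mul_assoc, ← mul_smul_comm, ← diagonal_smul]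
    simp only [Complex.ofReal_mul]
    rfl
  rw [hsmul, vnEntropy_unitary_conj_diagonal, vnEntropy_unitary_conj_diagonal,
    re_trace_unitary_conj_diagonal]
  simp only [Real.negMulLog_mul, Finset.sum_add_distrib, Finset.mul_sum, Finset.sum_mul]
  ring

theorem vnEntropy_kronecker {A : Matrix m m ℂ} {B : Matrix n n ℂ} (hA : A.IsHermitian)
    (hB : B.IsHermitian) :
    vnEntropy (A ⊗ₖ B) = B.trace.re * vnEntropy A + A.trace.re * vnEntropy B := by
  obtain ⟨U, d, rfl⟩ := exists_eq_unitary_conj_diagonal hA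
  obtain ⟨V, e, rfl⟩ := exists_eq_unitary_conj_diagonal hB
  have hkron : (U.1 * diagonal (fun i => (d i : ℂ)) * star U.1) ⊗ₖ
        (V.1 * diagonal (fun j => (e j : ℂ)) * star V.1) =
      (U.1 ⊗ₖ V.1) * diagonal (fun p : m × n => ((d p.1 * e p.2 : ℝ) : ℂ)) *
        star (U.1 ⊗ₖ V.1) := by
    simp only [mul_kronecker_mul, diagonal_kronecker_diagonal, star_eq_conjTranspose,
      conjTranspose_kronecker, Complex.ofReal_mul]
  rw [hkron, vnEntropy_unitary_conj_diagonal ⟨U.1 ⊗ₖ V.1, kronecker_mem_unitary U.2 V.2⟩]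
  simp only [vnEntropy_unitary_conj_diagonal, re_trace_unitary_conj_diagonal, Real.negMulLog_mul,
    Finset.sum_add_distrib, Fintype.sum_prod_type, ← Finset.sum_mul, ← Finset.mul_sum]

theorem vnEntropy_zero : vnEntropy (0 : Matrix n n ℂ) = 0 := by
  simpa using vnEntropy_smul 0 (isHermitian_zero (n := n))

open Polynomial in
theorem charpoly_mul_charpoly_of_mul_eq_zero {S : Type*} [CommRing S] {A B : Matrix n n S}
    (h : A * B = 0) :
    A.charpoly * B.charpoly = X ^ Fintype.card n * (A + B).charpoly := by
  have hC : C.mapMatrix A * C.mapMatrix B = (0 : Matrix n n S[X]) := by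
    rw [← map_mul, h, map_zero]
  have hcharmatrix : A.charmatrix * B.charmatrix = (X : S[X]) • (A + B).charmatrix := by
    simp only [charmatrix, map_add, sub_mul, mul_sub, hC, scalar_apply,
      ← smul_one_eq_diagonal, smul_mul_assoc, mul_smul_comm, one_mul, mul_one, smul_sub, smul_add]
    abel
  rw [charpoly, charpoly, ← det_mul, hcharmatrix, det_smul, charpoly]

theorem vnEntropy_add_of_mul_eq_zero {A B : Matrix n n ℂ} (hA : A.IsHermitian)
    (hB : B.IsHermitian) (h : A * B = 0) : vnEntropy (A + B) = vnEntropy A + vnEntropy B := by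
  have hroots := congrArg Polynomial.roots (charpoly_mul_charpoly_of_mul_eq_zero h)
  rw [Polynomial.roots_mul (mul_ne_zero A.charpoly_monic.ne_zero B.charpoly_monic.ne_zero),
    Polynomial.roots_mul (mul_ne_zero (pow_ne_zero _ Polynomial.X_ne_zero)
      (A + B).charpoly_monic.ne_zero), Polynomial.roots_X_pow] at hroots
  have hsum := congrArg (fun s => (s.map fun z : ℂ => Real.negMulLog z.re).sum) hroots
  -- The extra roots contributed by `X ^ card n` are zero and carry no entropy.
  simp only [Multiset.map_add, Multiset.sum_add, Multiset.map_nsmul, Multiset.sum_nsmul,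
    Multiset.map_singleton, Multiset.sum_singleton, Complex.zero_re, Real.negMulLog_zero,
    smul_zero, zero_add] at hsum
  rw [vnEntropy_eq_sum_roots_charpoly hA, vnEntropy_eq_sum_roots_charpoly hB,
    vnEntropy_eq_sum_roots_charpoly (hA.add hB), hsum]

theorem vnEntropy_sum_of_pairwise_mul_eq_zero {s : Finset ι} {A : ι → Matrix n n ℂ}
    (hA : ∀ i ∈ s, (A i).IsHermitian) (h : (s : Set ι).Pairwise fun i j => A i * A j = 0) :
    vnEntropy (∑ i ∈ s, A i) = ∑ i ∈ s, vnEntropy (A i) := by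
  classical
  induction s using Finset.induction_on with
  | empty => simp only [Finset.sum_empty, vnEntropy_zero]
  | insert i s hi ih =>
    rw [Finset.forall_mem_insert] at hA
    have hmul : A i * ∑ j ∈ s, A j = 0 := by
      rw [Finset.mul_sum]
      exact Finset.sum_eq_zero fun j hj => h (Finset.mem_insert_self i s)
        (Finset.mem_insert_of_mem hj) (ne_of_mem_of_not_mem hj hi).symm
    rw [Finset.sum_insert hi, Finset.sum_insert hi,
      vnEntropy_add_of_mul_eq_zero hA.1 (isSelfAdjoint_sum s hA.2) hmul,
      ih hA.2 (h.mono (Finset.coe_subset.mpr (Finset.subset_insert i s)))]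

end Entropy

section PartialTrace

variable {A B : Type*}

theorem isHermitian_ptraceRight [Fintype B] {M : Matrix (A × B) (A × B) ℂ} (hM : M.IsHermitian) :
    (ptraceRight M).IsHermitian := by
  ext i j
  simp [ptraceRight, hM.apply]

theorem trace_ptraceRight [Fintype A] [Fintype B] (M : Matrix (A × B) (A × B) ℂ) :
    (ptraceRight M).trace = M.trace := by
  simp [ptraceRight, trace, Fintype.sum_prod_type]

theorem ptraceLeft_sum_kronecker {ι : Type*} [Fintype A] (s : Finset ι) (M : ι → Matrix A A ℂ)
    (N : ι → Matrix B B ℂ) :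
    ptraceLeft (∑ i ∈ s, M i ⊗ₖ N i) = ∑ i ∈ s, (M i).trace • N i := by
  ext x y
  simp only [ptraceLeft, of_apply, Matrix.sum_apply, kroneckerMap_apply, Matrix.smul_apply, trace,
    diag_apply, smul_eq_mul, Finset.sum_mul]
  exact Finset.sum_comm

theorem ptrace3E_sum_kronecker {ι R Q E : Type*} [Fintype E] (s : Finset ι)
    (M : ι → Matrix R R ℂ) (N : ι → Matrix (Q × E) (Q × E) ℂ) :
    ptrace3E (∑ i ∈ s, M i ⊗ₖ N i) = ∑ i ∈ s, M i ⊗ₖ ptraceRight (N i) := by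
  ext x y
  simp only [ptrace3E, ptraceRight, of_apply, Matrix.sum_apply, kroneckerMap_apply,
    Finset.mul_sum]
  exact Finset.sum_comm

theorem kronecker_one_mul_apply {k : Type*} [Fintype A] [Fintype B] [DecidableEq B]
    (L : Matrix A A ℂ) (M : Matrix (A × B) k ℂ) (p : A × B) (j : k) :
    ((L ⊗ₖ (1 : Matrix B B ℂ)) * M) p j = ∑ a, L p.1 a * M (a, p.2) j := by
  simp [mul_apply, Fintype.sum_prod_type, one_apply]

theorem mul_kronecker_one_apply {k : Type*} [Fintype A] [Fintype B] [DecidableEq B]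
    (M : Matrix k (A × B) ℂ) (L : Matrix A A ℂ) (j : k) (p : A × B) :
    (M * (L ⊗ₖ (1 : Matrix B B ℂ))) j p = ∑ a, M j (a, p.2) * L a p.1 := by
  simp [mul_apply, Fintype.sum_prod_type, one_apply]

theorem ptraceRight_kronecker_one_mul [Fintype A] [Fintype B] [DecidableEq B]
    (L : Matrix A A ℂ) (M : Matrix (A × B) (A × B) ℂ) :
    ptraceRight ((L ⊗ₖ (1 : Matrix B B ℂ)) * M) = L * ptraceRight M := by
  ext i j
  simp only [ptraceRight, of_apply, kronecker_one_mul_apply]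
  simp only [mul_apply, of_apply, Finset.mul_sum]
  exact Finset.sum_comm

theorem ptraceRight_mul_kronecker_one [Fintype A] [Fintype B] [DecidableEq B]
    (M : Matrix (A × B) (A × B) ℂ) (L : Matrix A A ℂ) :
    ptraceRight (M * (L ⊗ₖ (1 : Matrix B B ℂ))) = ptraceRight M * L := by
  ext i j
  simp only [ptraceRight, of_apply, mul_kronecker_one_apply]
  simp only [mul_apply, of_apply, Finset.sum_mul]
  exact Finset.sum_comm

theorem ptraceRight_mul_ptraceRight_eq_zero [Fintype A] [Fintype B] [DecidableEq B]
    {P P' : Matrix A A ℂ} {M M' : Matrix (A × B) (A × B) ℂ} (hP : P * P' = 0)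
    (hM : (P ⊗ₖ (1 : Matrix B B ℂ)) * M * (P ⊗ₖ (1 : Matrix B B ℂ)) = M)
    (hM' : (P' ⊗ₖ (1 : Matrix B B ℂ)) * M' * (P' ⊗ₖ (1 : Matrix B B ℂ)) = M') :
    ptraceRight M * ptraceRight M' = 0 := by
  calc ptraceRight M * ptraceRight M'
      = P * ptraceRight M * P * (P' * ptraceRight M' * P') := by
        simp only [← ptraceRight_kronecker_one_mul, ← ptraceRight_mul_kronecker_one, hM, hM']
    _ = P * ptraceRight M * (P * P') * (ptraceRight M' * P') := by simp only [mul_assoc]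
    _ = 0 := by rw [hP, mul_zero, zero_mul]

end PartialTrace

section Support

variable {A B : Type*} [Fintype A] [Fintype B]

theorem star_dotProduct_ptraceRight_mulVec [DecidableEq B] (M : Matrix (A × B) (A × B) ℂ)
    (u : A → ℂ) :
    star u ⬝ᵥ ptraceRight M *ᵥ u =
      ∑ b, star (fun p : A × B => if p.2 = b then u p.1 else 0) ⬝ᵥ
        M *ᵥ fun p => if p.2 = b then u p.1 else 0 := by
  simp only [dotProduct, mulVec, ptraceRight, of_apply, Pi.star_apply, Fintype.sum_prod_type,
    apply_ite star, star_zero, mul_ite, mul_zero, ite_mul, zero_mul, Finset.sum_ite_eq',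
    Finset.mem_univ, if_true, Finset.sum_mul, Finset.mul_sum, Finset.sum_ite_irrel,
    Finset.sum_const_zero]
  exact (Finset.sum_congr rfl fun _ _ => Finset.sum_comm).trans Finset.sum_comm

theorem mulVec_eq_zero_of_ptraceRight_mulVec_eq_zero {ρ : Matrix (A × B) (A × B) ℂ}
    (hρ : ρ.PosSemidef) {v : A × B → ℂ} (hv : ∀ b, ptraceRight ρ *ᵥ (fun a => v (a, b)) = 0) :
    ρ *ᵥ v = 0 := by
  classical
  let w (b c : B) : A × B → ℂ := fun p => if p.2 = c then v (p.1, b) else 0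
  have hslice (b c : B) : ρ *ᵥ w b c = 0 := by
    have hsum : ∑ c, star (w b c) ⬝ᵥ ρ *ᵥ w b c = 0 := by
      rw [← star_dotProduct_ptraceRight_mulVec ρ fun a => v (a, b), hv b, dotProduct_zero]
    exact (hρ.dotProduct_mulVec_zero_iff _).mp <|
      (Finset.sum_eq_zero_iff_of_nonneg fun c _ => hρ.dotProduct_mulVec_nonneg (w b c)).mp hsum c
        (Finset.mem_univ c)
  have hdecomp : v = ∑ b, w b b := by
    ext p
    simp [w]
  rw [hdecomp, mulVec_sum]
  exact Finset.sum_eq_zero fun b _ => hslice b b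

theorem mul_eq_zero_of_ptraceRight_kronecker_one_mul_eq_zero {k : Type*} [DecidableEq B]
    {ρ : Matrix (A × B) (A × B) ℂ} (hρ : ρ.PosSemidef) {M : Matrix (A × B) k ℂ}
    (h : (ptraceRight ρ ⊗ₖ (1 : Matrix B B ℂ)) * M = 0) : ρ * M = 0 := by
  ext p j
  refine congrFun (mulVec_eq_zero_of_ptraceRight_mulVec_eq_zero hρ (v := fun q => M q j)
    fun b => funext fun a => ?_) p
  exact (kronecker_one_mul_apply _ M (a, b) j).symm.trans (congrFun (congrFun h (a, b)) j)

theorem mul_eq_zero_of_ptraceRight_mul_ptraceRight_eq_zero {ρ σ : Matrix (A × B) (A × B) ℂ}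
    (hρ : ρ.PosSemidef) (hσ : σ.PosSemidef) (h : ptraceRight ρ * ptraceRight σ = 0) :
    ρ * σ = 0 := by
  classical
  have hρσ : ρ * (ptraceRight σ ⊗ₖ (1 : Matrix B B ℂ)) = 0 :=
    mul_eq_zero_of_ptraceRight_kronecker_one_mul_eq_zero hρ <| by
      rw [← mul_kronecker_mul, h, zero_kronecker]
  have hσρ : σ * ρ = 0 := mul_eq_zero_of_ptraceRight_kronecker_one_mul_eq_zero hσ <| by
    simpa [conjTranspose_kronecker, hρ.isHermitian.eq,
      (isHermitian_ptraceRight hσ.isHermitian).eq] using congrArg conjTranspose hρσ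
  simpa [hρ.isHermitian.eq, hσ.isHermitian.eq] using congrArg conjTranspose hσρ

end Support

section ConditionalEntropy

/-- Conditional entropy `S(A|B) = S(ρ_AB) - S(ρ_B)` of a bipartite operator, the conditioning
system being the second tensor factor. -/
def condEntropy {A B : Type*} [Fintype A] [DecidableEq A] [Fintype B] [DecidableEq B]
    (ρ : Matrix (A × B) (A × B) ℂ) : ℝ :=
  vnEntropy ρ - vnEntropy (ptraceLeft ρ)

theorem condMutualInfo_eq_condEntropy_sub_condEntropy {R Q E : Type*} [Fintype R] [DecidableEq R]
    [Fintype Q] [DecidableEq Q] [Fintype E] [DecidableEq E]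
    (ρ : Matrix (R × Q × E) (R × Q × E) ℂ) :
    condMutualInfo ρ = condEntropy (ptrace3E ρ) - condEntropy ρ := by
  unfold condMutualInfo condEntropy
  ring

theorem isHermitian_kronecker {m n : Type*} {M : Matrix m m ℂ} {N : Matrix n n ℂ}
    (hM : M.IsHermitian) (hN : N.IsHermitian) : (M ⊗ₖ N).IsHermitian := by
  rw [IsHermitian, conjTranspose_kronecker, hM.eq, hN.eq]

theorem condEntropy_sum_kronecker {ι A B : Type*} [Fintype A] [DecidableEq A] [Fintype B]
    [DecidableEq B] {s : Finset ι} {M : ι → Matrix A A ℂ} {N : ι → Matrix B B ℂ}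
    (hM : ∀ i ∈ s, (M i).IsHermitian) (hN : ∀ i ∈ s, (N i).IsHermitian)
    (h : (s : Set ι).Pairwise fun i j => N i * N j = 0) :
    condEntropy (∑ i ∈ s, M i ⊗ₖ N i) =
      ∑ i ∈ s, (N i).trace.re * (vnEntropy (M i) - Real.negMulLog (M i).trace.re) := by
  have htrace i (hi : i ∈ s) : (M i).trace = ((M i).trace.re : ℂ) := by
    refine (Complex.conj_eq_iff_re.mp ?_).symm
    rw [← Complex.star_def, ← trace_conjTranspose, (hM i hi).eq]
  rw [condEntropy, ptraceLeft_sum_kronecker, vnEntropy_sum_of_pairwise_mul_eq_zero,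
    vnEntropy_sum_of_pairwise_mul_eq_zero, ← Finset.sum_sub_distrib]
  · refine Finset.sum_congr rfl fun i hi => ?_
    rw [htrace i hi, vnEntropy_smul _ (hN i hi), vnEntropy_kronecker (hM i hi) (hN i hi)]
    simp only [Complex.ofReal_re]
    ring
  · intro i hi
    rw [htrace i hi]
    exact (hN i hi).smul (Complex.conj_ofReal _)
  · exact fun i hi j hj hij => by simp [h hi hj hij]
  · exact fun i hi => isHermitian_kronecker (hM i hi) (hN i hi)
  · exact fun i hi j hj hij => by simp [← mul_kronecker_mul, h hi hj hij]

end ConditionalEntropy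

theorem stmt9_general {R Q E X : Type*} [Fintype R] [DecidableEq R] [Fintype Q] [DecidableEq Q]
    [Fintype E] [DecidableEq E] [Fintype X]
    {ω : X → Matrix R R ℂ} (hω : ∀ x, (ω x).PosSemidef)
    {ζ : X → Matrix (Q × E) (Q × E) ℂ} (hζ : ∀ x, (ζ x).PosSemidef)
    (hOrth : Pairwise fun x y => ptraceRight (ζ x) * ptraceRight (ζ y) = 0) :
    condMutualInfo (∑ x, ω x ⊗ₖ ζ x) = 0 := by
  have hωH x (_ : x ∈ Finset.univ) : (ω x).IsHermitian := (hω x).isHermitian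
  have hRQ := condEntropy_sum_kronecker hωH
    (fun x _ => isHermitian_ptraceRight (hζ x).isHermitian) (hOrth.set_pairwise _)
  have hRQE := condEntropy_sum_kronecker hωH (fun x _ => (hζ x).isHermitian) fun x _ y _ hxy =>
    mul_eq_zero_of_ptraceRight_mul_ptraceRight_eq_zero (hζ x) (hζ y) (hOrth hxy)
  simp only [trace_ptraceRight] at hRQ
  rw [condMutualInfo_eq_condEntropy_sub_condEntropy, ptrace3E_sum_kronecker, hRQ, hRQE, sub_self]

/-- A state of the form `ρ_RQE = Σ_x q_x ω^x_R ⊗ ζ^x_QE`, where the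
`ζ^x_QE` are supported on mutually orthogonal projectors `P^x` on `Q`, satisfies
`I(R;E|Q)_ρ = 0`. -/
theorem stmt9 {R Q E X : Type} [Fintype R] [DecidableEq R] [Fintype Q] [DecidableEq Q]
    [Fintype E] [DecidableEq E] [Fintype X]
    (q : X → ℝ) (hq0 : ∀ x, 0 ≤ q x) (hq1 : ∑ x, q x = 1)
    (ω : X → Matrix R R ℂ) (hω : ∀ x, IsState (ω x))
    (ζ : X → Matrix (Q × E) (Q × E) ℂ) (hζ : ∀ x, IsState (ζ x))
    (P : X → Matrix Q Q ℂ)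
    (hProj : ∀ x, (P x).IsHermitian ∧ P x * P x = P x)
    (hOrth : ∀ x y, x ≠ y → P x * P y = 0)
    (hSupp : ∀ x, (P x ⊗ₖ (1 : Matrix E E ℂ)) * ζ x * (P x ⊗ₖ (1 : Matrix E E ℂ)) = ζ x) :
    condMutualInfo (∑ x, (q x : ℂ) • (ω x ⊗ₖ ζ x)) = 0 := by
  simp only [← smul_kronecker]
  exact stmt9_general (fun x => (hω x).1.smul (Complex.zero_le_real.mpr (hq0 x)))
    (fun x => (hζ x).1)
    fun x y hxy => ptraceRight_mul_ptraceRight_eq_zero (hOrth x y hxy) (hSupp x) (hSupp y)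
end
end
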